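/- arXiv:0910.1237 — 2 statements merged into one kernel-verified Lean document; each statement's English description precedes it below -/
import Mathlib

section
/- Let (α,β,γ) ∈ R₂. If (G,w) ∈ Tri(α,β,γ) is extremal, then each of the three vertex classes A, B, C of G contains at least 2 vertices. -/
/-!
Suppose a class of an extremal graph, say `C`, is a single vertex `z`, which then has weight `1`.
The neighbours of `z` in `A` and `B` have total weights `β` and `α`, so the pairs `(a,b)` with
`az` and `bz` edges have density `αβ`; as `ab` is an edge with density `γ`, at least
`αβ + γ - 1` of the pairs span a triangle with `z` (`triDensity_ge_of_singleton`).

On the other hand `H7` beats this bound strictly. Give `a₁, a₂` the weights `1 - p, p`, give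
`b₁, b₂` the weights `q, 1 - q` with `pq = 1 - γ`, and let the densities `α` and `β` determine the
weights of `c₁, c₂, c₃`. The triangle density becomes `αp + βq - 2(1 - γ)`. It is smaller than
`αβ + γ - 1` exactly when `(αp - (1 - γ))(p - β) < 0`, that is for `p` strictly between
`(1 - γ)/α` and `β`; this interval is nonempty because `αβ + γ > 1`. The weights of `c₁` and `c₃`
are then nonnegative, and that of `c₂` is nonnegative as soon as
`αp² - (α + β - γ)p + β(1 - γ) ≥ 0`; this quadratic in `p` has discriminant `Δ(α,β,γ) < 0`.
This is `exists_triDensity_lt`.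

The other two classes reduce to `C` by rotating the class labels cyclically, which permutes the
densities and preserves extremality (`Extremal.rot`).
-/

open Finset

/-- A tripartite graph on `n` vertices: each vertex is assigned one of
three classes, adjacency is symmetric, and edges only join distinct classes. -/
structure TriGraph (n : ℕ) where
  cls : Fin n → Fin 3
  adj : Fin n → Fin n → Bool
  symm : ∀ u v, adj u v = adj v u
  tripart : ∀ u v, adj u v = true → cls u ≠ cls v

/-- The set of vertices in class `i`. -/
def classSet {n : ℕ} (G : TriGraph n) (i : Fin 3) : Finset (Fin n) :=
  Finset.univ.filter (fun v => G.cls v = i)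

/-- A weighting of a tripartite graph: weights in `[0,1]` summing to `1`
on each class. -/
structure Weighting {n : ℕ} (G : TriGraph n) where
  w : Fin n → ℝ
  nonneg : ∀ v, 0 ≤ w v
  le_one : ∀ v, w v ≤ 1
  sum_one : ∀ i : Fin 3, ∑ v ∈ classSet G i, w v = 1

/-- Weighted edge density between classes `i` and `j`. -/
noncomputable def edgeDensity {n : ℕ} (G : TriGraph n) (w : Fin n → ℝ) (i j : Fin 3) : ℝ :=
  ∑ x ∈ classSet G i, ∑ y ∈ classSet G j, if G.adj x y then w x * w y else 0

/-- Weighted triangle density. -/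
noncomputable def triDensity {n : ℕ} (G : TriGraph n) (w : Fin n → ℝ) : ℝ :=
  ∑ a ∈ classSet G 0, ∑ b ∈ classSet G 1, ∑ c ∈ classSet G 2,
    if G.adj a b && G.adj a c && G.adj b c then w a * w b * w c else 0

/-- `(G,W) ∈ Tri(α,β,γ)`: the three edge densities are `α` (between B and C),
`β` (between A and C) and `γ` (between A and B), where A, B, C are classes 0, 1, 2. -/
def InTri {n : ℕ} (G : TriGraph n) (W : Weighting G) (α β γ : ℝ) : Prop :=
  edgeDensity G W.w 1 2 = α ∧ edgeDensity G W.w 0 2 = β ∧ edgeDensity G W.w 0 1 = γ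

/-- The minimal triangle density over all weighted tripartite graphs with
edge densities `α, β, γ`. -/
noncomputable def Tmin (α β γ : ℝ) : ℝ :=
  sInf { t : ℝ | ∃ (n : ℕ) (G : TriGraph n) (W : Weighting G),
    InTri G W α β γ ∧ triDensity G W.w = t }

/-- `(G,W)` is extremal: it lies in `Tri(α,β,γ)` and attains `Tmin`. -/
def Extremal {n : ℕ} (G : TriGraph n) (W : Weighting G) (α β γ : ℝ) : Prop :=
  InTri G W α β γ ∧ triDensity G W.w = Tmin α β γ

/-- `(G,W)` is vertex minimal: no member of `Tri(α,β,γ)` with the same triangle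
density has fewer vertices. -/
def VertexMinimal {n : ℕ} (G : TriGraph n) (W : Weighting G) (α β γ : ℝ) : Prop :=
  InTri G W α β γ ∧
    ¬ ∃ (m : ℕ) (G' : TriGraph m) (W' : Weighting G'),
        m < n ∧ InTri G' W' α β γ ∧ triDensity G' W'.w = triDensity G W.w

/-- Membership in the cube `[0,1]³`. -/
def inCube (α β γ : ℝ) : Prop :=
  α ∈ Set.Icc (0:ℝ) 1 ∧ β ∈ Set.Icc (0:ℝ) 1 ∧ γ ∈ Set.Icc (0:ℝ) 1

/-- The region `R`. -/
def inR (α β γ : ℝ) : Prop :=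
  inCube α β γ ∧ 1 < α * β + γ ∧ 1 < α * γ + β ∧ 1 < β * γ + α

/-- The discriminant `Δ(α,β,γ)`. -/
noncomputable def Delta (α β γ : ℝ) : ℝ :=
  α^2 + β^2 + γ^2 - 2*α*β - 2*α*γ - 2*β*γ + 4*α*β*γ

/-- The region `R₁ = {(α,β,γ) ∈ R : Δ ≥ 0}`. -/
def inR1 (α β γ : ℝ) : Prop := inR α β γ ∧ 0 ≤ Delta α β γ

/-- The region `R₂ = R \ R₁`. -/
def inR2 (α β γ : ℝ) : Prop := inR α β γ ∧ Delta α β γ < 0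

/-- Adjacency of a complete tripartite graph minus a given list of (non-)edges. -/
def mkAdj {n : ℕ} (cls : Fin n → Fin 3) (nonEdges : List (ℕ × ℕ)) : Fin n → Fin n → Bool :=
  fun u v => (cls u != cls v) &&
    !(nonEdges.contains (u.val, v.val) || nonEdges.contains (v.val, u.val))

/-- `H₆`: classes A = {0,1}, B = {2,3}, C = {4,5} (vertices aᵢ, bᵢ, cᵢ in order);
the complete tripartite graph `K_{2,2,2}` minus the edges a₂b₁, b₂c₁, a₁c₂. -/
def H6 : TriGraph 6 where
  cls := ![0,0,1,1,2,2]
  adj := mkAdj ![0,0,1,1,2,2] [(1,2),(3,4),(0,5)]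
  symm := by decide
  tripart := by decide

/-- `H₇`: classes A = {0,1}, B = {2,3}, C = {4,5,6};
`K_{2,2,3}` minus the edges a₂b₁, a₁c₂, a₁c₃, b₂c₁, b₂c₂. -/
def H7 : TriGraph 7 where
  cls := ![0,0,1,1,2,2,2]
  adj := mkAdj ![0,0,1,1,2,2,2] [(1,2),(0,5),(0,6),(3,4),(3,5)]
  symm := by decide
  tripart := by decide

/-- `H₇′`: classes A = {0,1}, B = {2,3,4}, C = {5,6};
`K_{2,3,2}` minus the edges a₂b₁, a₁c₂, b₂c₁, b₂c₂, b₃c₁. -/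
def H7' : TriGraph 7 where
  cls := ![0,0,1,1,1,2,2]
  adj := mkAdj ![0,0,1,1,1,2,2] [(1,2),(0,6),(3,5),(3,6),(4,5)]
  symm := by decide
  tripart := by decide

/-- `H₉`: classes A = {0,1,2}, B = {3,4,5}, C = {6,7,8};
`K_{3,3,3}` minus the 9-cycle a₁c₂, c₂b₂, b₂c₁, c₁b₃, b₃a₂, a₂b₁, b₁a₃, a₃c₃, c₃a₁. -/
def H9 : TriGraph 9 where
  cls := ![0,0,0,1,1,1,2,2,2]
  adj := mkAdj ![0,0,0,1,1,1,2,2,2] [(0,7),(4,7),(4,6),(5,6),(1,5),(1,3),(2,3),(2,8),(0,8)]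
  symm := by decide
  tripart := by decide

/-- `F₆`: classes A = {0,1}, B = {2,3}, C = {4,5};
`K_{2,2,2}` minus the edges a₁b₁, a₁c₁, b₁c₁, a₂c₂, b₂c₂. -/
def F6 : TriGraph 6 where
  cls := ![0,0,1,1,2,2]
  adj := mkAdj ![0,0,1,1,2,2] [(0,2),(0,4),(2,4),(1,5),(3,5)]
  symm := by decide
  tripart := by decide

/-- Strong isomorphism of tripartite graphs: a graph isomorphism mapping
vertex classes onto vertex classes. -/
def StronglyIso {n m : ℕ} (G : TriGraph n) (H : TriGraph m) : Prop :=
  ∃ (e : Fin n ≃ Fin m) (σ : Fin 3 ≃ Fin 3),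
    (∀ u v, H.adj (e u) (e v) = G.adj u v) ∧ ∀ v, H.cls (e v) = σ (G.cls v)

/-- A double weighting: a function `p` assigning each edge a value in `(0,1]`. -/
structure DWeight {n : ℕ} (G : TriGraph n) where
  p : Fin n → Fin n → ℝ
  symm : ∀ u v, p u v = p v u
  pos : ∀ u v, G.adj u v = true → 0 < p u v
  le_one : ∀ u v, G.adj u v = true → p u v ≤ 1

/-- Edge density of a doubly-weighted tripartite graph. -/
noncomputable def dEdgeDensity {n : ℕ} (G : TriGraph n) (w : Fin n → ℝ)
    (p : Fin n → Fin n → ℝ) (i j : Fin 3) : ℝ :=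
  ∑ x ∈ classSet G i, ∑ y ∈ classSet G j, if G.adj x y then w x * w y * p x y else 0

/-- Triangle density of a doubly-weighted tripartite graph. -/
noncomputable def dTriDensity {n : ℕ} (G : TriGraph n) (w : Fin n → ℝ)
    (p : Fin n → Fin n → ℝ) : ℝ :=
  ∑ a ∈ classSet G 0, ∑ b ∈ classSet G 1, ∑ c ∈ classSet G 2,
    if G.adj a b && G.adj a c && G.adj b c then
      w a * w b * w c * p a b * p a c * p b c
    else 0

/-- `C_{ab}`: the vertices of class C (class 2) adjacent to both `a` and `b`. -/
def Cset {n : ℕ} (G : TriGraph n) (a b : Fin n) : Finset (Fin n) :=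
  Finset.univ.filter (fun c => G.cls c = 2 ∧ G.adj a c = true ∧ G.adj b c = true)

/-- Edge density of a simple (unweighted) tripartite graph between classes `i` and `j`. -/
noncomputable def simpleEdgeDensity {n : ℕ} (G : TriGraph n) (i j : Fin 3) : ℝ :=
  (∑ x ∈ classSet G i, ∑ y ∈ classSet G j, if G.adj x y then (1:ℝ) else 0) /
    ((classSet G i).card * (classSet G j).card)

/-- Triangle density of a simple (unweighted) tripartite graph. -/
noncomputable def simpleTriDensity {n : ℕ} (G : TriGraph n) : ℝ :=
  (∑ a ∈ classSet G 0, ∑ b ∈ classSet G 1, ∑ c ∈ classSet G 2,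
    if G.adj a b && G.adj a c && G.adj b c then (1:ℝ) else 0) /
    ((classSet G 0).card * (classSet G 1).card * (classSet G 2).card)

/-! ### Cyclic relabelling of the classes -/

/-- The graph `G` with the class labels rotated by `i ↦ i + 1` in `Fin 3`. -/
def rotG {n : ℕ} (G : TriGraph n) : TriGraph n where
  cls v := G.cls v + 1
  adj := G.adj
  symm := G.symm
  tripart u v h := by
    have := G.tripart u v h
    simpa using this

lemma classSet_rotG {n : ℕ} (G : TriGraph n) (i : Fin 3) :
    classSet (rotG G) (i + 1) = classSet G i := by
  ext v
  simp [classSet, rotG]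

lemma classSet_rotG_zero {n : ℕ} (G : TriGraph n) : classSet (rotG G) 0 = classSet G 2 :=
  classSet_rotG G 2

lemma classSet_rotG_one {n : ℕ} (G : TriGraph n) : classSet (rotG G) 1 = classSet G 0 :=
  classSet_rotG G 0

lemma classSet_rotG_two {n : ℕ} (G : TriGraph n) : classSet (rotG G) 2 = classSet G 1 :=
  classSet_rotG G 1

/-- The same vertex weights, viewed on the relabelled graph. -/
def rotW {n : ℕ} {G : TriGraph n} (W : Weighting G) : Weighting (rotG G) where
  w := W.w
  nonneg := W.nonneg
  le_one := W.le_one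
  sum_one i := by
    have := classSet_rotG G (i - 1)
    rw [sub_add_cancel] at this
    rw [this]
    exact W.sum_one _

lemma edgeDensity_comm {n : ℕ} (G : TriGraph n) (w : Fin n → ℝ) (i j : Fin 3) :
    edgeDensity G w i j = edgeDensity G w j i := by
  unfold edgeDensity
  rw [Finset.sum_comm]
  refine Finset.sum_congr rfl fun x _ => Finset.sum_congr rfl fun y _ => ?_
  rw [G.symm y x, mul_comm]

lemma triDensity_rotG {n : ℕ} (G : TriGraph n) (w : Fin n → ℝ) :
    triDensity (rotG G) w = triDensity G w := by
  unfold triDensity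
  rw [classSet_rotG_zero, classSet_rotG_one, classSet_rotG_two, Finset.sum_comm]
  refine Finset.sum_congr rfl fun a _ => ?_
  rw [Finset.sum_comm]
  refine Finset.sum_congr rfl fun b _ => Finset.sum_congr rfl fun c _ => ?_
  have h1 : (rotG G).adj c a = G.adj a c := G.symm c a
  have h2 : (rotG G).adj c b = G.adj b c := G.symm c b
  have h3 : (rotG G).adj a b = G.adj a b := rfl
  rw [h1, h2, h3]
  cases G.adj a b <;> cases G.adj a c <;> cases G.adj b c <;> simp <;> ring

lemma InTri.rot {n : ℕ} {G : TriGraph n} {W : Weighting G} {α β γ : ℝ}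
    (h : InTri G W α β γ) : InTri (rotG G) (rotW W) γ α β := by
  obtain ⟨h1, h2, h3⟩ := h
  refine ⟨?_, ?_, ?_⟩
  · rw [← h3]; unfold edgeDensity; rw [classSet_rotG_one, classSet_rotG_two]; rfl
  · rw [← h1, edgeDensity_comm]; unfold edgeDensity
    rw [classSet_rotG_zero, classSet_rotG_two]; rfl
  · rw [← h2, edgeDensity_comm]; unfold edgeDensity
    rw [classSet_rotG_zero, classSet_rotG_one]; rfl

/-- The triangle densities realised in `Tri(α,β,γ)`, the set whose infimum is `Tmin α β γ`. -/
def triSet (α β γ : ℝ) : Set ℝ :=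
  { t : ℝ | ∃ (n : ℕ) (G : TriGraph n) (W : Weighting G),
    InTri G W α β γ ∧ triDensity G W.w = t }

lemma triSet_subset (α β γ : ℝ) : triSet α β γ ⊆ triSet γ α β := by
  rintro t ⟨n, G, W, h, rfl⟩
  exact ⟨n, rotG G, rotW W, h.rot, triDensity_rotG G W.w⟩

lemma Tmin_rot (α β γ : ℝ) : Tmin γ α β = Tmin α β γ := by
  -- the relabelling has order three, so the inclusion goes all the way round
  have : triSet γ α β = triSet α β γ :=
    Set.Subset.antisymm ((triSet_subset _ _ _).trans (triSet_subset _ _ _)) (triSet_subset _ _ _)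
  exact congrArg sInf this

lemma Extremal.rot {n : ℕ} {G : TriGraph n} {W : Weighting G} {α β γ : ℝ}
    (h : Extremal G W α β γ) : Extremal (rotG G) (rotW W) γ α β :=
  ⟨h.1.rot, by rw [Tmin_rot, ← h.2]; exact triDensity_rotG G W.w⟩

lemma inR2.rot {α β γ : ℝ} (h : inR2 α β γ) : inR2 γ α β := by
  obtain ⟨⟨⟨h1, h2, h3⟩, h4, h5, h6⟩, h7⟩ := h
  refine ⟨⟨⟨h3, h1, h2⟩, ?_, ?_, ?_⟩, ?_⟩
  · linarith
  · linarith
  · linarith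
  · unfold Delta at *
    linarith

/-! ### The lower bound when `C` is a single vertex -/

lemma triDensity_ge_of_singleton {n : ℕ} {G : TriGraph n} {W : Weighting G} {α β γ : ℝ}
    (h : InTri G W α β γ) {z : Fin n} (hz : classSet G 2 = {z}) :
    α * β + γ - 1 ≤ triDensity G W.w := by
  obtain ⟨h1, h2, h3⟩ := h
  have wz : W.w z = 1 := by simpa [hz] using W.sum_one 2
  have e1 : α = ∑ b ∈ classSet G 1, if G.adj b z then W.w b else 0 := by
    rw [← h1]; simp [edgeDensity, hz, wz]
  have e2 : β = ∑ a ∈ classSet G 0, if G.adj a z then W.w a else 0 := by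
    rw [← h2]; simp [edgeDensity, hz, wz]
  have e12 : α * β = ∑ a ∈ classSet G 0, ∑ b ∈ classSet G 1,
      (if G.adj a z then W.w a else 0) * (if G.adj b z then W.w b else 0) := by
    rw [mul_comm, e1, e2, Finset.sum_mul_sum]
  have e0 : (1 : ℝ) = ∑ a ∈ classSet G 0, ∑ b ∈ classSet G 1, W.w a * W.w b := by
    rw [← Finset.sum_mul_sum, W.sum_one 0, W.sum_one 1, one_mul]
  rw [e12, ← h3, e0]
  unfold edgeDensity triDensity
  rw [hz, ← Finset.sum_add_distrib, ← Finset.sum_sub_distrib]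
  refine Finset.sum_le_sum fun a _ => ?_
  rw [← Finset.sum_add_distrib, ← Finset.sum_sub_distrib]
  refine Finset.sum_le_sum fun b _ => ?_
  have := mul_nonneg (W.nonneg a) (W.nonneg b)
  rw [Finset.sum_singleton, wz]
  cases G.adj a b <;> cases G.adj a z <;> cases G.adj b z <;> simp <;> linarith

/-! ### A weighting of `H7` with few triangles -/

lemma classSet_H7_zero : classSet H7 0 = {0, 1} := by decide
lemma classSet_H7_one : classSet H7 1 = {2, 3} := by decide
lemma classSet_H7_two : classSet H7 2 = {4, 5, 6} := by decide

/-- The weighting of `H7` giving `a₁, a₂` the weights `1 - p, p`, giving `b₁, b₂` the weights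
`q, 1 - q`, and giving `c₁, c₂, c₃` the weights `r, 1 - r - s, s`. -/
def weightH7 (p q r s : ℝ) (hp : p ∈ Set.Icc (0 : ℝ) 1) (hq : q ∈ Set.Icc (0 : ℝ) 1)
    (hr : 0 ≤ r) (hs : 0 ≤ s) (hrs : r + s ≤ 1) : Weighting H7 where
  w := ![1 - p, p, q, 1 - q, r, 1 - r - s, s]
  nonneg v := by
    obtain ⟨hp0, hp1⟩ := hp
    obtain ⟨hq0, hq1⟩ := hq
    fin_cases v <;> simp <;> linarith
  le_one v := by
    obtain ⟨hp0, hp1⟩ := hp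
    obtain ⟨hq0, hq1⟩ := hq
    fin_cases v <;> simp <;> linarith
  sum_one i := by
    fin_cases i
    · simp [classSet_H7_zero]
    · simp [classSet_H7_one]
    · simp [classSet_H7_two]

lemma weightH7_densities (p q r s : ℝ) (hp : p ∈ Set.Icc (0 : ℝ) 1) (hq : q ∈ Set.Icc (0 : ℝ) 1)
    (hr : 0 ≤ r) (hs : 0 ≤ s) (hrs : r + s ≤ 1) :
    InTri H7 (weightH7 p q r s hp hq hr hs hrs) (q + (1 - q) * s) (p + (1 - p) * r) (1 - p * q) ∧
    triDensity H7 (weightH7 p q r s hp hq hr hs hrs).w = (1 - p) * q * r + p * (1 - q) * s := by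
  refine ⟨⟨?_, ?_, ?_⟩, ?_⟩ <;>
    simp only [edgeDensity, triDensity, classSet_H7_zero, classSet_H7_one, classSet_H7_two] <;>
    simp [weightH7, H7, mkAdj] <;> ring

lemma exists_triDensity_lt {α β γ : ℝ} (h : inR2 α β γ) :
    ∃ W : Weighting H7, InTri H7 W α β γ ∧ triDensity H7 W.w < α * β + γ - 1 := by
  obtain ⟨⟨⟨⟨hα0, hα1⟩, ⟨hβ0, hβ1⟩, ⟨hγ0, hγ1⟩⟩, h1, h2, h3⟩, hD⟩ := h
  have hα : 0 < α := by nlinarith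
  have hβ : 0 < β := by nlinarith
  obtain ⟨p, hp1, hp2⟩ := exists_between
    (show (1 - γ) / α < β by rw [div_lt_iff₀ hα]; linarith)
  have hp0 : 0 < p := lt_of_le_of_lt (div_nonneg (by linarith) hα.le) hp1
  rw [div_lt_iff₀ hα] at hp1
  obtain ⟨q, hq⟩ : ∃ q, q = (1 - γ) / p := ⟨_, rfl⟩
  have hpq : p * q = 1 - γ := by rw [hq]; field_simp
  have hq0 : 0 ≤ q := by rw [hq]; exact div_nonneg (by linarith) hp0.le
  have hq1 : q < α := by rw [hq, div_lt_iff₀ hp0]; linarith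
  have hp' : 0 < 1 - p := by linarith
  have hq' : 0 < 1 - q := by linarith
  -- four times `α p` times the difference of the two sides is `(2αp - (α + β - γ))² - Δ`
  have key : α + β - γ ≤ α * p + β * q := by
    unfold Delta at hD
    have e : 4 * (α * p) * (α * p + β * q - (α + β - γ)) =
        (2 * α * p - (α + β - γ)) ^ 2 -
          (α^2 + β^2 + γ^2 - 2*α*β - 2*α*γ - 2*β*γ + 4*α*β*γ) := by
      linear_combination (4 * α * β) * hpq
    have hnn : 0 < 4 * (α * p) * (α * p + β * q - (α + β - γ)) := by
      rw [e]; linarith [sq_nonneg (2 * α * p - (α + β - γ))]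
    linarith [(pos_iff_pos_of_mul_pos hnn).1 (by positivity)]
  obtain ⟨r, hr⟩ : ∃ r, r = (β - p) / (1 - p) := ⟨_, rfl⟩
  obtain ⟨s, hs⟩ : ∃ s, s = (α - q) / (1 - q) := ⟨_, rfl⟩
  have hr' : (1 - p) * r = β - p := by rw [hr]; field_simp
  have hs' : (1 - q) * s = α - q := by rw [hs]; field_simp
  have hr0 : 0 ≤ r := by rw [hr]; exact div_nonneg (by linarith) hp'.le
  have hs0 : 0 ≤ s := by rw [hs]; exact div_nonneg (by linarith) hq'.le
  have hrs : r + s ≤ 1 := by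
    have e : (1 - p) * (1 - q) * (1 - (r + s)) = α * p + β * q - (α + β - γ) := by
      linear_combination (-(1 - q)) * hr' - (1 - p) * hs' - hpq
    have : 0 ≤ 1 - (r + s) := by
      by_contra hc
      have := mul_neg_of_pos_of_neg (mul_pos hp' hq') (not_le.1 hc)
      linarith
    linarith
  obtain ⟨hI, hT⟩ := weightH7_densities p q r s ⟨hp0.le, by linarith⟩ ⟨hq0, by linarith⟩ hr0 hs0 hrs
  refine ⟨weightH7 p q r s ⟨hp0.le, by linarith⟩ ⟨hq0, by linarith⟩ hr0 hs0 hrs, ?_, ?_⟩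
  · rw [hs', hr', hpq] at hI
    convert hI using 1 <;> ring
  · rw [hT]
    have e : (1 - p) * q * r + p * (1 - q) * s - (α * β + γ - 1) = -((α - q) * (β - p)) := by
      linear_combination q * hr' + p * hs' - hpq
    have := mul_pos (sub_pos.2 hq1) (sub_pos.2 hp2)
    linarith

/-! ### Conclusion -/

lemma triDensity_nonneg {n : ℕ} {G : TriGraph n} (W : Weighting G) : 0 ≤ triDensity G W.w := by
  unfold triDensity
  refine Finset.sum_nonneg fun a _ => Finset.sum_nonneg fun b _ => Finset.sum_nonneg fun c _ => ?_
  split_ifs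
  · exact mul_nonneg (mul_nonneg (W.nonneg a) (W.nonneg b)) (W.nonneg c)
  · exact le_rfl

lemma two_le_card_classSet_two {n : ℕ} {G : TriGraph n} {W : Weighting G} {α β γ : ℝ}
    (h : inR2 α β γ) (hex : Extremal G W α β γ) : 2 ≤ (classSet G 2).card := by
  by_contra! hlt
  have hne : (classSet G 2).card ≠ 0 := by
    intro h0
    have := W.sum_one 2
    rw [Finset.card_eq_zero.1 h0] at this
    simp at this
  obtain ⟨z, hz⟩ := Finset.card_eq_one.1 (show (classSet G 2).card = 1 by omega)
  obtain ⟨W', hI, hT⟩ := exists_triDensity_lt h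
  have hle : Tmin α β γ ≤ triDensity H7 W'.w := by
    refine csInf_le ⟨0, ?_⟩ ⟨7, H7, W', hI, rfl⟩
    rintro t ⟨m, G', W'', -, rfl⟩
    exact triDensity_nonneg W''
  have := triDensity_ge_of_singleton hex.1 hz
  rw [hex.2] at this
  linarith

/-- If (α,β,γ) ∈ R₂ and (G,w) ∈ Tri(α,β,γ) is extremal then every
vertex class has at least 2 vertices. -/
theorem stmt15 (α β γ : ℝ) (h : inR2 α β γ) {n : ℕ} (G : TriGraph n) (W : Weighting G)
    (hex : Extremal G W α β γ) :
    ∀ i : Fin 3, 2 ≤ (classSet G i).card := by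
  intro i
  fin_cases i
  · have := two_le_card_classSet_two h.rot.rot hex.rot.rot
    rwa [classSet_rotG_two, classSet_rotG_one] at this
  · have := two_le_card_classSet_two h.rot hex.rot
    rwa [classSet_rotG_two] at this
  · exact two_le_card_classSet_two h hex
end

section
/- For any α, β, γ ∈ [0,1] and any weighting w such that (F₆,w) ∈ Tri(α,β,γ), one has t(F₆,w) ≥ min{αβ+γ−1, αγ+β−1, βγ+α−1}. -/
/-!
Write `x, y, z` for the weights of `a₁, b₁, c₁`; the other vertex of each class has the complementary
weight. Then `γ = 1 - xy`, `β = x(1-z) + (1-x)z`, `α = y(1-z) + (1-y)z` and `t = (1-x)(1-y)z`, and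
* `t - (βγ + α - 1) = (1-z)(1-x)(1-y(1+x)) + xyz + xy(1-x)z`, nonnegative when `y ≤ 1/2`;
* `t - (αγ + β - 1)` is the same expression with `x` and `y` exchanged, nonnegative when `x ≤ 1/2`;
* `t - (αβ + γ - 1) = z((1-z)(1-2x)(1-2y) + xy)`, nonnegative when `x, y ≥ 1/2`.
So one of the three bounds always holds.
-/

open Finset

/-- The bound by `βγ + α - 1` when `y ≤ 1/2`. Exchanging `x` and `y` (hence `α` and `β`) gives the
bound by `αγ + β - 1` when `x ≤ 1/2`. -/
lemma F6_bound_of_le_half {x y z : ℝ} (hx : 0 ≤ x) (hx1 : x ≤ 1) (hy : 0 ≤ y) (hy2 : y ≤ 1 / 2)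
    (hz : 0 ≤ z) (hz1 : z ≤ 1) :
    (x * (1 - z) + (1 - x) * z) * (1 - x * y) + (y * (1 - z) + (1 - y) * z) - 1
      ≤ (1 - x) * (1 - y) * z := by
  have hx' : 0 ≤ 1 - x := by linarith
  have hz' : 0 ≤ 1 - z := by linarith
  have h1 : 0 ≤ 1 - y * (1 + x) := by nlinarith
  have h2 : 0 ≤ (1 - z) * (1 - x) * (1 - y * (1 + x)) + x * y * z + x * y * (1 - x) * z := by
    positivity
  linarith

lemma F6_bound_of_half_le {x y z : ℝ} (hx : 1 / 2 ≤ x) (hy : 1 / 2 ≤ y)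
    (hz : 0 ≤ z) (hz1 : z ≤ 1) :
    (y * (1 - z) + (1 - y) * z) * (x * (1 - z) + (1 - x) * z) + (1 - x * y) - 1
      ≤ (1 - x) * (1 - y) * z := by
  have hx' : 0 ≤ 2 * x - 1 := by linarith
  have hy' : 0 ≤ 2 * y - 1 := by linarith
  have hz' : 0 ≤ 1 - z := by linarith
  have hx0 : 0 ≤ x := by linarith
  have hy0 : 0 ≤ y := by linarith
  have h : 0 ≤ z * ((1 - z) * (2 * x - 1) * (2 * y - 1) + x * y) := by positivity
  linarith

/-- For any α, β, γ ∈ [0,1] and any weighting w with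
(F₆,w) ∈ Tri(α,β,γ), t(F₆,w) ≥ min{αβ+γ−1, αγ+β−1, βγ+α−1}. -/
theorem stmt18 (α β γ : ℝ)
    (hα : α ∈ Set.Icc (0:ℝ) 1) (hβ : β ∈ Set.Icc (0:ℝ) 1) (hγ : γ ∈ Set.Icc (0:ℝ) 1)
    (W : Weighting F6) (h : InTri F6 W α β γ) :
    min (min (α * β + γ - 1) (α * γ + β - 1)) (β * γ + α - 1) ≤ triDensity F6 W.w := by
  have c0 : classSet F6 0 = {0, 1} := by decide
  have c1 : classSet F6 1 = {2, 3} := by decide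
  have c2 : classSet F6 2 = {4, 5} := by decide
  have s0 := W.sum_one 0
  have s1 := W.sum_one 1
  have s2 := W.sum_one 2
  rw [c0, Finset.sum_pair (by decide)] at s0
  rw [c1, Finset.sum_pair (by decide)] at s1
  rw [c2, Finset.sum_pair (by decide)] at s2
  have e02 : F6.adj 0 2 = false := by decide
  have e03 : F6.adj 0 3 = true := by decide
  have e12 : F6.adj 1 2 = true := by decide
  have e13 : F6.adj 1 3 = true := by decide
  have e04 : F6.adj 0 4 = false := by decide
  have e05 : F6.adj 0 5 = true := by decide
  have e14 : F6.adj 1 4 = true := by decide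
  have e15 : F6.adj 1 5 = false := by decide
  have e24 : F6.adj 2 4 = false := by decide
  have e25 : F6.adj 2 5 = true := by decide
  have e34 : F6.adj 3 4 = true := by decide
  have e35 : F6.adj 3 5 = false := by decide
  have a2 : W.w 1 = 1 - W.w 0 := by linarith
  have b2 : W.w 3 = 1 - W.w 2 := by linarith
  have c2' : W.w 5 = 1 - W.w 4 := by linarith
  obtain ⟨h1, h2, h3⟩ := h
  have p01 : (0 : Fin 6) ≠ 1 := by decide
  have p23 : (2 : Fin 6) ≠ 3 := by decide
  have p45 : (4 : Fin 6) ≠ 5 := by decide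
  have hα' : α = W.w 2 * (1 - W.w 4) + (1 - W.w 2) * W.w 4 := by
    rw [← h1, edgeDensity, c1, c2]
    simp only [Finset.sum_pair p23, Finset.sum_pair p45, e24, e25, e34, e35, b2, c2']
    simp
  have hβ' : β = W.w 0 * (1 - W.w 4) + (1 - W.w 0) * W.w 4 := by
    rw [← h2, edgeDensity, c0, c2]
    simp only [Finset.sum_pair p01, Finset.sum_pair p45, e04, e05, e14, e15, a2, c2']
    simp
  have hγ' : γ = 1 - W.w 0 * W.w 2 := by
    rw [← h3, edgeDensity, c0, c1]
    simp only [Finset.sum_pair p01, Finset.sum_pair p23, e02, e03, e12, e13, a2, b2]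
    simp
    ring
  have ht : triDensity F6 W.w = (1 - W.w 0) * (1 - W.w 2) * W.w 4 := by
    rw [triDensity, c0, c1, c2]
    simp only [Finset.sum_pair p01, Finset.sum_pair p23, Finset.sum_pair p45, e02, e03, e12, e13,
      e04, e05, e14, e15, e24, e25, e34, e35, a2, b2]
    simp
  have hx := W.nonneg 0
  have hx1 := W.le_one 0
  have hy := W.nonneg 2
  have hy1 := W.le_one 2
  have hz := W.nonneg 4
  have hz1 := W.le_one 4
  rw [ht, hα', hβ', hγ']
  rcases le_total (W.w 2) (1 / 2) with hy2 | hy2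
  · exact (min_le_right _ _).trans (F6_bound_of_le_half hx hx1 hy hy2 hz hz1)
  rcases le_total (W.w 0) (1 / 2) with hx2 | hx2
  · refine ((min_le_left _ _).trans (min_le_right _ _)).trans ?_
    linarith [F6_bound_of_le_half hy hy1 hx hx2 hz hz1]
  · exact ((min_le_left _ _).trans (min_le_left _ _)).trans
      (F6_bound_of_half_le hx2 hy2 hz hz1)
end
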